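/- For partitions λ and μ, one has λ ∈ Π(μ) if and only if λ ⊆ μ and the skew diagram μ/λ lies in Γ; that is, x_λ is obtained from x_μ by flipping a set of pairwise disjoint-or-nested arrow pairs if and only if μ/λ admits a covering by hooks all belonging to Γ₀. -/

import Mathlib

open Finset

/-- The content of a box in position `(i, j)` is `j - i`. -/
def content (b : ℕ × ℕ) : ℤ := (b.2 : ℤ) - (b.1 : ℤ)

/-- The anticontent of a box in position `(i, j)` is `i + j`. -/
def anticontent (b : ℕ × ℕ) : ℤ := (b.1 : ℤ) + (b.2 : ℤ)

/-- Two boxes are adjacent if they share a side. -/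
def BoxAdj (a b : ℕ × ℕ) : Prop :=
  (a.1 = b.1 ∧ (a.2 + 1 = b.2 ∨ b.2 + 1 = a.2)) ∨
  (a.2 = b.2 ∧ (a.1 + 1 = b.1 ∨ b.1 + 1 = a.1))

/-- A finite set of boxes is connected if any two boxes are linked by a chain of
adjacent boxes inside the set. -/
def IsConnectedBoxes (S : Finset (ℕ × ℕ)) : Prop :=
  ∀ a ∈ S, ∀ b ∈ S,
    Relation.ReflTransGen (fun x y => x ∈ S ∧ y ∈ S ∧ BoxAdj x y) a b

/-- A skew Young diagram: the difference of two Young diagrams `l ⊆ m`. -/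
def IsSkew (S : Finset (ℕ × ℕ)) : Prop :=
  ∃ l m : YoungDiagram, l ≤ m ∧ S = m.cells \ l.cells

/-- A hook: a nonempty connected skew Young diagram with no two boxes of the same content. -/
def IsHook (S : Finset (ℕ × ℕ)) : Prop :=
  IsSkew S ∧ S.Nonempty ∧ IsConnectedBoxes S ∧
    ∀ a ∈ S, ∀ b ∈ S, content a = content b → a = b

/-- Height: number of rows occupied. -/
def ht (S : Finset (ℕ × ℕ)) : ℕ := (S.image Prod.fst).card

/-- Width: number of columns occupied. -/
def wd (S : Finset (ℕ × ℕ)) : ℕ := (S.image Prod.snd).card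

/-- Two hooks are disjoint if no box of one equals or shares a side with a box of the other. -/
def HooksDisjoint (γ δ : Finset (ℕ × ℕ)) : Prop :=
  ∀ a ∈ γ, ∀ b ∈ δ, a ≠ b ∧ ¬ BoxAdj a b

/-- `γ` is nested in `δ`: each lower and right side of a box of `γ` is shared
with another box of `γ` or a box of `δ`. -/
def NestedIn (γ δ : Finset (ℕ × ℕ)) : Prop :=
  ∀ b ∈ γ, ((b.1 + 1, b.2) ∈ γ ∨ (b.1 + 1, b.2) ∈ δ) ∧
           ((b.1, b.2 + 1) ∈ γ ∨ (b.1, b.2 + 1) ∈ δ)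

/-- A covering of `κ`: a decomposition of its boxes into connected hooks, any
two of which are disjoint or nested. -/
def IsCovering (κ : Finset (ℕ × ℕ)) (C : Finset (Finset (ℕ × ℕ))) : Prop :=
  (∀ γ ∈ C, IsHook γ) ∧
  (∀ γ ∈ C, γ ⊆ κ) ∧
  (∀ b ∈ κ, ∃! γ, γ ∈ C ∧ b ∈ γ) ∧
  (∀ γ ∈ C, ∀ δ ∈ C, γ ≠ δ → HooksDisjoint γ δ ∨ NestedIn γ δ ∨ NestedIn δ γ)

/-- The D-condition: the anticontent of the box of minimal content is minimal
among the anticontents of all boxes (no box strictly above the diagonal through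
the minimal box). -/
def DCond (S : Finset (ℕ × ℕ)) : Prop :=
  ∀ m ∈ S, (∀ c ∈ S, content m ≤ content c) →
    ∀ b ∈ S, anticontent m ≤ anticontent b

/-- `Γ₀`: connected hooks satisfying the HW-condition and the D-condition. -/
def InGammaZero (γ : Finset (ℕ × ℕ)) : Prop :=
  IsHook γ ∧ wd γ = ht γ + 1 ∧ DCond γ

/-- The sequence `x_λ = (λ₁, λ₂ − 1, λ₃ − 2, …)` (indexed from `0`). -/
def xseq (μ : YoungDiagram) (k : ℕ) : ℤ := (μ.rowLen k : ℤ) - (k : ℤ)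

/-- `lam` is obtained from `μ` by flipping the wb pair `(lw, lb)`:
`lw < lb`, `lw` is white and `lb` is black in `x_μ`, and the black set of
`x_lam` is that of `x_μ` with `lb` replaced by `lw`. -/
def IsFlip (μ lam : YoungDiagram) (lw lb : ℤ) : Prop :=
  lw < lb ∧ lw ∉ Set.range (xseq μ) ∧ lb ∈ Set.range (xseq μ) ∧
    Set.range (xseq lam) = insert lw (Set.range (xseq μ) \ {lb})

/-- The number of black dots of `x_μ` in the interval `[a, b]`. -/
noncomputable def blackCount (μ : YoungDiagram) (a b : ℤ) : ℕ :=
  Nat.card {n : ℤ // n ∈ Set.Icc a b ∧ n ∈ Set.range (xseq μ)}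

/-- The number of white dots of `x_μ` in the interval `[a, b]`. -/
noncomputable def whiteCount (μ : YoungDiagram) (a b : ℤ) : ℕ :=
  Nat.card {n : ℤ // n ∈ Set.Icc a b ∧ n ∉ Set.range (xseq μ)}

/-- An arrow pair of `x_μ`: a wb pair `(lw, lb)` such that (hw-condition) the
interval `[lw, lb]` contains exactly one more white than black dot, and
(d-condition) no interval `(lw, m]` with `m < lb` contains fewer white than
black dots. -/
def ArrowPair (μ : YoungDiagram) (lw lb : ℤ) : Prop :=
  lw < lb ∧ lw ∉ Set.range (xseq μ) ∧ lb ∈ Set.range (xseq μ) ∧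
    whiteCount μ lw lb = blackCount μ lw lb + 1 ∧
    ∀ m : ℤ, lw < m → m < lb → blackCount μ (lw + 1) m ≤ whiteCount μ (lw + 1) m

/-- `Γ`: skew Young diagrams whose (unique) covering by pairwise
disjoint-or-nested hooks consists of hooks of `Γ₀`. -/
def InGamma (κ : Finset (ℕ × ℕ)) : Prop :=
  IsSkew κ ∧ ∃ C : Finset (Finset (ℕ × ℕ)), IsCovering κ C ∧ ∀ γ ∈ C, InGammaZero γ

/-- `λ ∈ Π(μ)`: `x_λ` is obtained from `x_μ` by flipping a finite collection of
arrow pairs of `x_μ`, any two of which are disjoint or nested. -/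
def InPi (μ lam : YoungDiagram) : Prop :=
  ∃ P : Finset (ℤ × ℤ),
    (∀ p ∈ P, ArrowPair μ p.1 p.2) ∧
    (∀ p ∈ P, ∀ q ∈ P, p ≠ q →
      (p.2 < q.1 ∨ q.2 < p.1 ∨ (q.1 < p.1 ∧ p.2 < q.2) ∨ (p.1 < q.1 ∧ q.2 < p.2))) ∧
    (∀ n : ℤ, n ∈ Set.range (xseq lam) ↔
      ((n ∈ Set.range (xseq μ) ∧ ∀ p ∈ P, p.2 ≠ n) ∨ ∃ p ∈ P, p.1 = n))


section Aux

lemma xseq_strictAnti (μ : YoungDiagram) : StrictAnti (xseq μ) := by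
  intro a b h
  have := μ.rowLen_anti a b h.le
  unfold xseq
  omega

lemma exists_xseq_le (μ : YoungDiagram) (c : ℤ) : ∃ k, xseq μ k ≤ c := by
  refine ⟨((μ.rowLen 0 : ℤ) - c).toNat, ?_⟩
  have := μ.rowLen_anti 0 ((μ.rowLen 0 : ℤ) - c).toNat (Nat.zero_le _)
  unfold xseq
  omega

open Classical in
/-- Number of rows of `μ` whose dot lies strictly right of `c`. -/
noncomputable def rimB (μ : YoungDiagram) (c : ℤ) : ℤ := (Nat.find (exists_xseq_le μ c) : ℕ)

lemma lt_rimB (μ : YoungDiagram) (c : ℤ) (i : ℕ) : (i : ℤ) < rimB μ c ↔ c < xseq μ i := by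
  classical
  unfold rimB
  rw [Nat.cast_lt, Nat.lt_find_iff]
  constructor
  · intro h
    have := h i le_rfl
    omega
  · intro h m hm
    have := (xseq_strictAnti μ).antitone hm
    omega

lemma rimB_nonneg (μ : YoungDiagram) (c : ℤ) : 0 ≤ rimB μ c := by
  unfold rimB
  exact Int.natCast_nonneg _

lemma rimB_ge (μ : YoungDiagram) (c : ℤ) : 0 ≤ c + rimB μ c := by
  by_contra h
  have h1 := rimB_nonneg μ c
  have h2 := (lt_rimB μ c (rimB μ c).toNat).2 (by
    unfold xseq
    omega)
  omega

lemma mem_iff_rimB (μ : YoungDiagram) (x : ℕ × ℕ) :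
    x ∈ μ.cells ↔ (x.1 : ℤ) < rimB μ (content x) := by
  rw [lt_rimB, YoungDiagram.mem_cells, show x = (x.1, x.2) from rfl,
    YoungDiagram.mem_iff_lt_rowLen]
  unfold xseq content
  simp only
  omega

lemma rimB_black (μ : YoungDiagram) (c : ℤ) (h : c ∈ Set.range (xseq μ)) :
    rimB μ (c - 1) = rimB μ c + 1 := by
  obtain ⟨k, rfl⟩ := h
  have a1 := lt_rimB μ (xseq μ k) k
  have a2 := lt_rimB μ (xseq μ k - 1) k
  have a3 := lt_rimB μ (xseq μ k - 1) (k + 1)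
  have a4 := (xseq_strictAnti μ) (Nat.lt_succ_self k)
  have h0 := rimB_nonneg μ (xseq μ k)
  have a5 : (k : ℤ) ≤ rimB μ (xseq μ k) := by
    rcases Nat.eq_zero_or_pos k with h | h
    · subst h; simpa using h0
    · have b1 := lt_rimB μ (xseq μ k) (k - 1)
      have b2 := (xseq_strictAnti μ) (show k - 1 < k by omega)
      omega
  simp only [Nat.succ_eq_add_one] at a4
  push_cast at a3
  omega

lemma rimB_white (μ : YoungDiagram) (c : ℤ) (h : c ∉ Set.range (xseq μ)) :
    rimB μ (c - 1) = rimB μ c := by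
  have key : ∀ i : ℕ, (i : ℤ) < rimB μ (c - 1) ↔ (i : ℤ) < rimB μ c := by
    intro i
    rw [lt_rimB, lt_rimB]
    have : xseq μ i ≠ c := fun e => h ⟨i, e⟩
    omega
  have h1 := rimB_nonneg μ c
  have h2 := rimB_nonneg μ (c - 1)
  have k1 := key (rimB μ c).toNat
  have k2 := key (rimB μ (c - 1)).toNat
  omega

lemma black_iff (μ : YoungDiagram) (c : ℤ) :
    c ∈ Set.range (xseq μ) ↔ rimB μ (c - 1) = rimB μ c + 1 := by
  refine ⟨rimB_black μ c, fun h => ?_⟩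
  by_contra h'
  have := rimB_white μ c h'
  omega

lemma white_iff (μ : YoungDiagram) (c : ℤ) :
    c ∉ Set.range (xseq μ) ↔ rimB μ (c - 1) = rimB μ c := by
  refine ⟨rimB_white μ c, fun h h' => ?_⟩
  have := rimB_black μ c h'
  omega

/-- unit decreasing steps -/
def UStep (f : ℤ → ℤ) : Prop := ∀ c, f (c - 1) = f c ∨ f (c - 1) = f c + 1

lemma rimB_step (μ : YoungDiagram) : UStep (rimB μ) := by
  intro c
  by_cases h : c ∈ Set.range (xseq μ)
  · exact Or.inr (rimB_black μ c h)
  · exact Or.inl (rimB_white μ c h)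

lemma rimB_zero (μ : YoungDiagram) (c : ℤ) (h : (μ.rowLen 0 : ℤ) ≤ c) : rimB μ c = 0 := by
  have h1 := rimB_nonneg μ c
  have h2 := lt_rimB μ c 0
  unfold xseq at h2
  push_cast at h2
  omega

lemma UStep.bounds {f : ℤ → ℤ} (hf : UStep f) {a b : ℤ} (h : a ≤ b) :
    f b ≤ f a ∧ f a ≤ f b + (b - a) := by
  induction b, h using Int.leInduction with
  | base => simp
  | succ n hn ih =>
    have := hf (n + 1)
    rw [show n + 1 - 1 = n by ring] at this
    omega

lemma UStep.ivt {f : ℤ → ℤ} (hf : UStep f) {a b : ℤ} (h : a ≤ b) :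
    ∀ v, f b ≤ v → v ≤ f a → ∃ c, a ≤ c ∧ c ≤ b ∧ f c = v := by
  induction b, h using Int.leInduction with
  | base => intro v h1 h2; exact ⟨a, le_rfl, le_rfl, by omega⟩
  | succ n hn ih =>
    intro v h1 h2
    have := hf (n + 1)
    rw [show n + 1 - 1 = n by ring] at this
    by_cases e : f (n + 1) = v
    · exact ⟨n + 1, by omega, le_rfl, e⟩
    · obtain ⟨c, hc⟩ := ih v (by omega) h2
      exact ⟨c, hc.1, by omega, hc.2.2⟩

lemma blackCount_eq (μ : YoungDiagram) (a b : ℤ) (h : a - 1 ≤ b) :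
    (blackCount μ a b : ℤ) = rimB μ (a - 1) - rimB μ b := by
  classical
  have e : ∀ b, blackCount μ a b = ((Finset.Icc a b).filter (· ∈ Set.range (xseq μ))).card := by
    intro b
    unfold blackCount
    apply Nat.subtype_card
    intro x
    simp
  induction b, h using Int.leInduction with
  | base => rw [e]; simp
  | succ n hn ih =>
    rw [e] at ih ⊢
    have : Finset.Icc a (n + 1) = insert (n + 1) (Finset.Icc a n) := by
      ext x; simp; omega
    rw [this, Finset.filter_insert]
    split_ifs with hh
    · have := rimB_black μ _ hh
      rw [show n + 1 - 1 = n by ring] at this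
      rw [Finset.card_insert_of_notMem (by simp)]
      push_cast
      omega
    · have := rimB_white μ _ hh
      rw [show n + 1 - 1 = n by ring] at this
      omega

lemma whiteCount_eq (μ : YoungDiagram) (a b : ℤ) (h : a - 1 ≤ b) :
    (whiteCount μ a b : ℤ) = b + 1 - a - (rimB μ (a - 1) - rimB μ b) := by
  classical
  have e1 : blackCount μ a b = ((Finset.Icc a b).filter (· ∈ Set.range (xseq μ))).card := by
    unfold blackCount
    apply Nat.subtype_card
    intro x
    simp
  have e2 : whiteCount μ a b = ((Finset.Icc a b).filter (¬ · ∈ Set.range (xseq μ))).card := by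
    unfold whiteCount
    apply Nat.subtype_card
    intro x
    simp
  have h3 := Finset.card_filter_add_card_filter_not (s := Finset.Icc a b)
    (fun x => x ∈ Set.range (xseq μ))
  rw [← e1, ← e2, Int.card_Icc] at h3
  have := blackCount_eq μ a b h
  omega

/-- Numerical form of being an arrow pair. -/
def NumArrow (f : ℤ → ℤ) (a b : ℤ) : Prop :=
  b - a = 2 * (f a - f (b - 1)) + 2 ∧ ∀ c, a ≤ c → c < b → 2 * (f a - f c) ≤ c - a

lemma arrow_iff (μ : YoungDiagram) (a b : ℤ) :
    ArrowPair μ a b ↔ a < b ∧ a ∉ Set.range (xseq μ) ∧ b ∈ Set.range (xseq μ) ∧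
      NumArrow (rimB μ) a b := by
  unfold ArrowPair NumArrow
  refine and_congr_right fun hab => and_congr_right fun ha => and_congr_right fun hb => ?_
  have h1 := blackCount_eq μ a b (by omega)
  have h2 := whiteCount_eq μ a b (by omega)
  have h3 := rimB_white μ a ha
  have h4 := rimB_black μ b hb
  refine and_congr (by omega) ⟨fun h c hc1 hc2 => ?_, fun h m hm1 hm2 => ?_⟩
  · rcases hc1.eq_or_lt with e | e
    · subst e; simp
    · have h5 := h c e hc2
      have h6 := blackCount_eq μ (a + 1) c (by omega)
      have h7 := whiteCount_eq μ (a + 1) c (by omega)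
      rw [show a + 1 - 1 = a by ring] at h6 h7
      omega
  · have h5 := h m hm1.le hm2
    have h6 := blackCount_eq μ (a + 1) m (by omega)
    have h7 := whiteCount_eq μ (a + 1) m (by omega)
    rw [show a + 1 - 1 = a by ring] at h6 h7
    omega

/-- `S` is the ribbon with contents `[a, b)` and row function `f`. -/
structure Rib (S : Finset (ℕ × ℕ)) (f : ℤ → ℤ) (a b : ℤ) : Prop where
  lt : a < b
  mem : ∀ x, x ∈ S ↔ a ≤ content x ∧ content x < b ∧ (x.1 : ℤ) = f (content x)
  ex : ∀ c, a ≤ c → c < b → ∃ x ∈ S, content x = c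

lemma content_row_ext {x y : ℕ × ℕ} (h1 : content x = content y) (h2 : x.1 = y.1) : x = y := by
  unfold content at h1
  ext
  · exact h2
  · omega

lemma isSkew_of_convex (S : Finset (ℕ × ℕ))
    (h : ∀ x ∈ S, ∀ y ∈ S, ∀ z, x ≤ z → z ≤ y → z ∈ S) : IsSkew S := by
  classical
  have memm : ∀ z, z ∈ S.biUnion (fun s => Finset.Iic s) ↔ ∃ s ∈ S, z ≤ s := by
    intro z; simp only [Finset.mem_biUnion, Finset.mem_Iic]
  let m : YoungDiagram := ⟨S.biUnion (fun s => Finset.Iic s), by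
    intro x y hxy hx
    rw [Finset.mem_coe, memm] at hx ⊢
    obtain ⟨s, hs, h'⟩ := hx
    exact ⟨s, hs, hxy.trans h'⟩⟩
  let l : YoungDiagram := ⟨S.biUnion (fun s => Finset.Iic s) \ S, by
    intro x y hxy hx
    rw [Finset.mem_coe, Finset.mem_sdiff, memm] at hx ⊢
    obtain ⟨⟨s, hs, h'⟩, h2⟩ := hx
    exact ⟨⟨s, hs, hxy.trans h'⟩, fun hy => h2 (h y hy s hs x hxy h')⟩⟩
  refine ⟨l, m, ?_, ?_⟩
  · intro x hx
    exact (Finset.mem_sdiff.1 hx).1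
  · ext x
    simp only [m, l, Finset.mem_sdiff]
    constructor
    · intro hx
      exact ⟨(memm x).2 ⟨x, hx, le_rfl⟩, fun h => h.2 hx⟩
    · rintro ⟨h1, h2⟩
      by_contra h3
      exact h2 ⟨h1, h3⟩

lemma Rib.isHook {S f a b} (hS : Rib S f a b) (hf : UStep f) : IsHook S := by
  have uniq : ∀ x ∈ S, ∀ y ∈ S, content x = content y → x = y := by
    intro x hx y hy h
    rw [hS.mem] at hx hy
    apply content_row_ext h
    rw [h] at hx
    omega
  refine ⟨isSkew_of_convex S ?_, ?_, ?_, uniq⟩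
  · intro x hx y hy z hxz hzy
    rw [hS.mem] at hx hy ⊢
    obtain ⟨l1, l2⟩ := hxz
    obtain ⟨l3, l4⟩ := hzy
    rcases le_total (content x) (content y) with hc | hc
    · have b1 := hf.bounds hc
      have e1 : x.1 = y.1 := by omega
      have e2 : content x ≤ content z := by unfold content; omega
      have e3 : content z ≤ content y := by unfold content; omega
      have b2 := hf.bounds e2
      have b3 := hf.bounds e3
      omega
    · have b1 := hf.bounds hc
      have e1 : x.2 = y.2 := by unfold content at *; omega
      have e2 : content z ≤ content x := by unfold content; omega
      have e3 : content y ≤ content z := by unfold content; omega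
      have b2 := hf.bounds e2
      have b3 := hf.bounds e3
      have b4 : content z = z.2 - z.1 := rfl
      have b5 : content x = x.2 - x.1 := rfl
      have b6 : content y = y.2 - y.1 := rfl
      omega
  · obtain ⟨x, hx, _⟩ := hS.ex a le_rfl hS.lt
    exact ⟨x, hx⟩
  · have adj : ∀ x ∈ S, ∀ y ∈ S, content y = content x + 1 → BoxAdj x y := by
      intro x hx y hy h
      rw [hS.mem] at hx hy
      have s := hf (content y)
      rw [show content y - 1 = content x by omega] at s
      have b5 : content x = x.2 - x.1 := rfl
      have b6 : content y = y.2 - y.1 := rfl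
      unfold BoxAdj
      omega
    have sym : ∀ x y : ℕ × ℕ, BoxAdj x y → BoxAdj y x := by
      intro x y; unfold BoxAdj; omega
    have up : ∀ n : ℕ, ∀ x ∈ S, ∀ y ∈ S, content y = content x + n →
        Relation.ReflTransGen (fun x y => x ∈ S ∧ y ∈ S ∧ BoxAdj x y) x y := by
      intro n
      induction n with
      | zero =>
        intro x hx y hy h
        rw [uniq x hx y hy (by omega)]
      | succ n ih =>
        intro x hx y hy h
        push_cast at h
        have m1 := (hS.mem x).1 hx
        have m2 := (hS.mem y).1 hy
        obtain ⟨z, hz, hzc⟩ := hS.ex (content y - 1) (by omega) (by omega)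
        exact (ih x hx z hz (by omega)).tail ⟨hz, hy, adj z hz y hy (by omega)⟩
    intro x hx y hy
    rcases le_total (content x) (content y) with hc | hc
    · exact up (content y - content x).toNat x hx y hy (by omega)
    · have := up (content x - content y).toNat y hy x hx (by omega)
      have hsymm : Std.Symm (fun x y => x ∈ S ∧ y ∈ S ∧ BoxAdj x y) :=
        ⟨fun u v ⟨h1, h2, h3⟩ => ⟨h2, h1, sym _ _ h3⟩⟩
      exact Relation.ReflTransGen.stdSymm.symm _ _ this

lemma Rib.ht_eq {S f a b} (hS : Rib S f a b) (hf : UStep f) :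
    (ht S : ℤ) = f a - f (b - 1) + 1 := by
  have hl := hS.lt
  have key : (S.image Prod.fst).image (fun n : ℕ => (n : ℤ)) = Finset.Icc (f (b - 1)) (f a) := by
    ext v
    simp only [Finset.mem_image, Finset.mem_Icc]
    constructor
    · rintro ⟨n, ⟨x, hx, rfl⟩, rfl⟩
      rw [hS.mem] at hx
      have b1 := hf.bounds hx.1
      have b2 := hf.bounds (show content x ≤ b - 1 by omega)
      omega
    · rintro ⟨h1, h2⟩
      obtain ⟨c, c1, c2, c3⟩ := hf.ivt (show a ≤ b - 1 by omega) v h1 h2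
      obtain ⟨x, hx, hxc⟩ := hS.ex c c1 (by omega)
      refine ⟨x.1, ⟨x, hx, rfl⟩, ?_⟩
      rw [hS.mem, hxc] at hx
      omega
  have h2 := congrArg Finset.card key
  rw [Finset.card_image_of_injective _ Nat.cast_injective, Int.card_Icc] at h2
  have := hf.bounds (show a ≤ b - 1 by omega)
  unfold ht
  omega

lemma Rib.wd_eq {S f a b} (hS : Rib S f a b) (hf : UStep f) :
    (wd S : ℤ) = (b - 1 + f (b - 1)) - (a + f a) + 1 := by
  have hl := hS.lt
  have hg : UStep (fun c => -(c + f c)) := by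
    intro c
    have := hf c
    simp only
    omega
  have key : (S.image Prod.snd).image (fun n : ℕ => (n : ℤ)) =
      Finset.Icc (a + f a) (b - 1 + f (b - 1)) := by
    ext v
    simp only [Finset.mem_image, Finset.mem_Icc]
    constructor
    · rintro ⟨n, ⟨x, hx, rfl⟩, rfl⟩
      rw [hS.mem] at hx
      have b1 := hf.bounds hx.1
      have b2 := hf.bounds (show content x ≤ b - 1 by omega)
      have b5 : content x = x.2 - x.1 := rfl
      omega
    · rintro ⟨h1, h2⟩
      obtain ⟨c, c1, c2, c3⟩ := hg.ivt (show a ≤ b - 1 by omega) (-v) (by omega)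
        (by omega)
      obtain ⟨x, hx, hxc⟩ := hS.ex c c1 (by omega)
      refine ⟨x.2, ⟨x, hx, rfl⟩, ?_⟩
      rw [hS.mem, hxc] at hx
      have b5 : content x = x.2 - x.1 := rfl
      omega
  have h2 := congrArg Finset.card key
  rw [Finset.card_image_of_injective _ Nat.cast_injective, Int.card_Icc] at h2
  have := hf.bounds (show a ≤ b - 1 by omega)
  unfold wd
  omega

lemma Rib.gammaZero_iff {S f a b} (hS : Rib S f a b) (hf : UStep f) :
    InGammaZero S ↔ NumArrow f a b := by
  have hl := hS.lt
  have h1 := hS.ht_eq hf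
  have h2 := hS.wd_eq hf
  unfold InGammaZero NumArrow
  rw [and_iff_right (hS.isHook hf)]
  refine and_congr (by omega) ?_
  obtain ⟨m, hm, hmc⟩ := hS.ex a le_rfl hl
  have hm' := (hS.mem m).1 hm
  constructor
  · intro h c c1 c2
    obtain ⟨x, hx, hxc⟩ := hS.ex c c1 c2
    have := h m hm (fun y hy => by rw [hS.mem] at hy; omega) x hx
    rw [hS.mem] at hx
    unfold anticontent at this
    have b5 : content x = x.2 - x.1 := rfl
    have b6 : content m = m.2 - m.1 := rfl
    rw [hxc] at hx
    rw [hmc] at hm'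
    omega
  · intro h m₂ hm₂ hmin x hx
    have q := hmin m hm
    rw [hS.mem] at hx hm₂
    have := h (content x) hx.1 hx.2.1
    have e : content m₂ = a := by omega
    rw [e] at hm₂
    have b5 : content x = x.2 - x.1 := rfl
    have b6 : content m₂ = m₂.2 - m₂.1 := rfl
    unfold anticontent
    omega

/-- Number of pairs whose interval of contents contains `c`. -/
def pairN (P : Finset (ℤ × ℤ)) (c : ℤ) : ℕ := (P.filter (fun p => p.1 ≤ c ∧ c < p.2)).card

lemma pairN_step (P : Finset (ℤ × ℤ)) (hP : ∀ p ∈ P, p.1 < p.2) (c : ℤ) :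
    pairN P (c - 1) + (P.filter (fun p => p.1 = c)).card =
      pairN P c + (P.filter (fun p => p.2 = c)).card := by
  unfold pairN
  rw [← Finset.card_union_of_disjoint, ← Finset.card_union_of_disjoint]
  · congr 1
    ext p
    simp only [Finset.mem_union, Finset.mem_filter]
    constructor
    · rintro (⟨h, h1⟩ | ⟨h, h1⟩) <;> have := hP p h <;> simp only [h, true_and] <;> omega
    · rintro (⟨h, h1⟩ | ⟨h, h1⟩) <;> have := hP p h <;> simp only [h, true_and] <;> omega
  · rw [Finset.disjoint_left]
    intro p
    simp only [Finset.mem_filter]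
    omega
  · rw [Finset.disjoint_left]
    intro p
    simp only [Finset.mem_filter]
    omega

lemma card_filter_ex {P : Finset (ℤ × ℤ)} (g : ℤ × ℤ → ℤ)
    (hg : ∀ p ∈ P, ∀ q ∈ P, g p = g q → p = q) (c : ℤ) :
    ((∃ p ∈ P, g p = c) ∧ (P.filter (fun p => g p = c)).card = 1) ∨
    ((¬ ∃ p ∈ P, g p = c) ∧ (P.filter (fun p => g p = c)).card = 0) := by
  by_cases h : ∃ p ∈ P, g p = c
  · left
    refine ⟨h, ?_⟩
    obtain ⟨p, hp, rfl⟩ := h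
    rw [Finset.card_eq_one]
    refine ⟨p, ?_⟩
    ext q
    simp only [Finset.mem_filter, Finset.mem_singleton]
    constructor
    · rintro ⟨h1, h2⟩; exact hg q h1 p hp h2
    · rintro rfl; exact ⟨hp, rfl⟩
  · right
    refine ⟨h, ?_⟩
    rw [Finset.card_eq_zero, Finset.filter_eq_empty_iff]
    intro p hp e
    exact h ⟨p, hp, e⟩

/-- The structural conditions on the set of pairs. -/
structure GoodP (μ : YoungDiagram) (P : Finset (ℤ × ℤ)) : Prop where
  lt : ∀ p ∈ P, p.1 < p.2
  w : ∀ p ∈ P, p.1 ∉ Set.range (xseq μ)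
  b : ∀ p ∈ P, p.2 ∈ Set.range (xseq μ)
  pw : ∀ p ∈ P, ∀ q ∈ P, p ≠ q →
      (p.2 < q.1 ∨ q.2 < p.1 ∨ (q.1 < p.1 ∧ p.2 < q.2) ∨ (p.1 < q.1 ∧ q.2 < p.2))

lemma GoodP.inj1 {μ P} (h : GoodP μ P) : ∀ p ∈ P, ∀ q ∈ P, p.1 = q.1 → p = q := by
  intro p hp q hq e
  by_contra hne
  have := h.pw p hp q hq hne
  have := h.lt p hp
  have := h.lt q hq
  omega

lemma GoodP.inj2 {μ P} (h : GoodP μ P) : ∀ p ∈ P, ∀ q ∈ P, p.2 = q.2 → p = q := by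
  intro p hp q hq e
  by_contra hne
  have := h.pw p hp q hq hne
  have := h.lt p hp
  have := h.lt q hq
  omega

lemma GoodP.flip_iff {μ P} (h : GoodP μ P) (lam : YoungDiagram) :
    (∀ n : ℤ, n ∈ Set.range (xseq lam) ↔
      ((n ∈ Set.range (xseq μ) ∧ ∀ p ∈ P, p.2 ≠ n) ∨ ∃ p ∈ P, p.1 = n)) ↔
    ∀ c, rimB lam c = rimB μ c - pairN P c := by
  have step : ∀ c, ((c ∈ Set.range (xseq lam) ↔
      ((c ∈ Set.range (xseq μ) ∧ ∀ p ∈ P, p.2 ≠ c) ∨ ∃ p ∈ P, p.1 = c)) ↔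
      rimB lam (c - 1) - rimB lam c = (rimB μ (c - 1) - pairN P (c - 1)) -
        (rimB μ c - pairN P c)) := by
    intro c
    have s := pairN_step P h.lt c
    have c1 := card_filter_ex (P := P) (fun p => p.1) h.inj1 c
    have c2 := card_filter_ex (P := P) (fun p => p.2) h.inj2 c
    have w : (∃ p ∈ P, p.1 = c) → c ∉ Set.range (xseq μ) := by
      rintro ⟨p, hp, rfl⟩; exact h.w p hp
    have b : (∃ p ∈ P, p.2 = c) → c ∈ Set.range (xseq μ) := by
      rintro ⟨p, hp, rfl⟩; exact h.b p hp
    have e : (∀ p ∈ P, p.2 ≠ c) ↔ ¬ ∃ p ∈ P, p.2 = c := by push Not; rfl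
    rw [e]
    have m1 := black_iff μ c
    have m2 := white_iff μ c
    have l1 := black_iff lam c
    have l2 := white_iff lam c
    generalize (∃ p ∈ P, p.1 = c) = X at *
    generalize (∃ p ∈ P, p.2 = c) = Y at *
    generalize (c ∈ Set.range (xseq μ)) = Z at *
    generalize (c ∈ Set.range (xseq lam)) = W at *
    generalize #{p ∈ P | p.1 = c} = A at *
    generalize #{p ∈ P | p.2 = c} = D at *
    generalize rimB μ (c - 1) = u at *
    generalize rimB lam (c - 1) = v at *
    generalize pairN P (c - 1) = n at *
    by_cases hX : X <;> by_cases hY : Y <;> by_cases hZ : Z <;> by_cases hW : W <;>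
      simp only [hX, hY, hZ, hW, true_and, false_and, or_true, true_or, or_false, false_or,
        not_true, not_false_iff, true_iff, false_iff, true_imp_iff, false_imp_iff,
        not_true_eq_false, not_false_eq_true, iff_true, iff_false, and_true, and_false]
        at c1 c2 w b m1 m2 l1 l2 ⊢ <;> omega
  constructor
  · intro hh
    have base : ∀ c, (μ.rowLen 0 : ℤ) + lam.rowLen 0 ≤ c → rimB lam c = rimB μ c - pairN P c := by
      intro c hc
      rw [rimB_zero μ c (by omega), rimB_zero lam c (by omega)]
      have : pairN P c = 0 := by
        unfold pairN
        rw [Finset.card_eq_zero, Finset.filter_eq_empty_iff]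
        intro p hp e
        obtain ⟨k, hk⟩ := h.b p hp
        have := (xseq_strictAnti μ).antitone (Nat.zero_le k)
        have e0 : xseq μ 0 = μ.rowLen 0 := by simp [xseq]
        omega
      omega
    have down : ∀ n : ℕ, ∀ c, (μ.rowLen 0 : ℤ) + lam.rowLen 0 ≤ c + n →
        rimB lam c = rimB μ c - pairN P c := by
      intro n
      induction n with
      | zero => intro c hc; exact base c (by simpa using hc)
      | succ n ih =>
        intro c hc
        have i1 := ih (c + 1) (by push_cast at hc; omega)
        have i2 := (step (c + 1)).1 (hh (c + 1))
        rw [show c + 1 - 1 = c by ring] at i2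
        omega
    intro c
    exact down ((μ.rowLen 0 : ℤ) + lam.rowLen 0 - c).toNat c (by omega)
  · intro hh n
    rw [step, hh n, hh (n - 1)]

lemma le_of_rimB {μ lam : YoungDiagram} (h : ∀ c, rimB lam c ≤ rimB μ c) : lam ≤ μ := by
  intro x hx
  rw [← YoungDiagram.mem_cells, mem_iff_rimB] at hx ⊢
  exact lt_of_lt_of_le hx (h _)

lemma rimB_le {μ lam : YoungDiagram} (h : lam ≤ μ) (c : ℤ) : rimB lam c ≤ rimB μ c := by
  have h1 := rimB_nonneg lam c
  have h2 := rimB_nonneg μ c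
  have h3 := rimB_ge μ c
  by_contra hlt
  have hx := mem_iff_rimB lam ((rimB μ c).toNat, (c + rimB μ c).toNat)
  have hy := mem_iff_rimB μ ((rimB μ c).toNat, (c + rimB μ c).toNat)
  have e : content ((rimB μ c).toNat, (c + rimB μ c).toNat) = c := by
    unfold content; simp only; omega
  rw [e] at hx hy
  simp only at hx hy
  have := hy.1 (h (hx.2 (by omega)))
  omega

lemma mem_skew (μ lam : YoungDiagram) (x : ℕ × ℕ) : x ∈ μ.cells \ lam.cells ↔
    rimB lam (content x) ≤ x.1 ∧ (x.1 : ℤ) < rimB μ (content x) := by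
  rw [Finset.mem_sdiff, mem_iff_rimB, mem_iff_rimB]
  omega

end Aux


section Forward

/-- Nesting depth of a pair. -/
def pdepth (P : Finset (ℤ × ℤ)) (p : ℤ × ℤ) : ℕ :=
  (P.filter (fun q => q.1 < p.1 ∧ p.2 < q.2)).card

/-- The ribbon with contents `[a, b)` and row function `f`. -/
noncomputable def ribSet (f : ℤ → ℤ) (a b : ℤ) : Finset (ℕ × ℕ) :=
  (Finset.Ico a b).image (fun c => ((f c).toNat, (c + f c).toNat))

lemma ribSet_rib {f : ℤ → ℤ} {a b : ℤ} (hab : a < b)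
    (h : ∀ c, a ≤ c → c < b → 0 ≤ f c ∧ 0 ≤ c + f c) : Rib (ribSet f a b) f a b := by
  have cont : ∀ c, a ≤ c → c < b → content ((f c).toNat, (c + f c).toNat) = c := by
    intro c h1 h2
    have := h c h1 h2
    unfold content
    simp only
    omega
  refine ⟨hab, fun x => ?_, fun c h1 h2 => ?_⟩
  · unfold ribSet
    simp only [Finset.mem_image, Finset.mem_Ico]
    constructor
    · rintro ⟨c, ⟨h1, h2⟩, rfl⟩
      rw [cont c h1 h2]
      have := h c h1 h2
      simp only
      omega
    · rintro ⟨h1, h2, h3⟩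
      refine ⟨content x, ⟨h1, h2⟩, ?_⟩
      apply content_row_ext (cont _ h1 h2)
      simp only
      omega
  · refine ⟨_, Finset.mem_image.2 ⟨c, Finset.mem_Ico.2 ⟨h1, h2⟩, rfl⟩, cont c h1 h2⟩

lemma pdepth_lt {P : Finset (ℤ × ℤ)} {p q : ℤ × ℤ} (hq : q ∈ P)
    (h : q.1 < p.1 ∧ p.2 < q.2) : pdepth P q < pdepth P p := by
  unfold pdepth
  apply Finset.card_lt_card
  rw [Finset.ssubset_iff_of_subset]
  · exact ⟨q, by simp [hq, h], by simp⟩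
  · intro r
    simp only [Finset.mem_filter]
    rintro ⟨h1, h2⟩
    exact ⟨h1, by omega⟩

lemma pdepth_lt_pairN {P : Finset (ℤ × ℤ)} {p : ℤ × ℤ} (hp : p ∈ P) (c : ℤ)
    (h : p.1 ≤ c ∧ c < p.2) : pdepth P p < pairN P c := by
  unfold pdepth pairN
  apply Finset.card_lt_card
  rw [Finset.ssubset_iff_of_subset]
  · exact ⟨p, by simp [hp, h], by simp⟩
  · intro r
    simp only [Finset.mem_filter]
    rintro ⟨h1, h2⟩
    exact ⟨h1, by omega⟩

lemma pdepth_surj {μ P} (h : GoodP μ P) (c : ℤ) (k : ℕ) (hk : k < pairN P c) :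
    ∃ p ∈ P, (p.1 ≤ c ∧ c < p.2) ∧ pdepth P p = k := by
  have := Finset.surjOn_of_injOn_of_card_le (s := P.filter (fun p => p.1 ≤ c ∧ c < p.2))
    (t := Finset.range (pairN P c)) (pdepth P) ?_ ?_ ?_
  · obtain ⟨p, hp, e⟩ := this (show k ∈ ((Finset.range (pairN P c) : Finset ℕ) : Set ℕ) by simpa)
    simp only [Finset.coe_filter, Set.mem_ofPred_eq] at hp
    exact ⟨p, hp.1, hp.2, e⟩
  · intro p hp
    simp only [Finset.coe_filter, Set.mem_ofPred_eq] at hp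
    simpa using pdepth_lt_pairN hp.1 c hp.2
  · intro p hp q hq e
    simp only [Finset.coe_filter, Set.mem_ofPred_eq] at hp hq
    by_contra hne
    rcases h.pw p hp.1 q hq.1 hne with h1 | h1 | h1 | h1
    · omega
    · omega
    · have := pdepth_lt hq.1 h1
      omega
    · have := pdepth_lt hp.1 h1
      omega
  · rw [Finset.card_range]; rfl

/-- row function at depth `d` -/
noncomputable def rowF (μ : YoungDiagram) (d : ℤ) (c : ℤ) : ℤ := rimB μ c - 1 - d

lemma rowF_step (μ : YoungDiagram) (d : ℤ) : UStep (rowF μ d) := by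
  intro c
  have := rimB_step μ c
  unfold rowF
  omega

lemma numArrow_rowF (μ : YoungDiagram) (d a b : ℤ) :
    NumArrow (rowF μ d) a b ↔ NumArrow (rimB μ) a b := by
  unfold NumArrow rowF
  have e : ∀ x y : ℤ, x - 1 - d - (y - 1 - d) = x - y := by intros; ring
  simp only [e]

lemma nested_of_depth {μ : YoungDiagram} {S T : Finset (ℕ × ℕ)} {d a b a' b' : ℤ}
    (hS : Rib S (rowF μ (d + 1)) a b) (hT : Rib T (rowF μ d) a' b')
    (ha : a ∉ Set.range (xseq μ)) (hb : b ∈ Set.range (xseq μ)) (h1 : a' < a) (h2 : b < b') :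
    NestedIn S T := by
  intro x hx
  rw [hS.mem] at hx
  rw [hS.mem, hT.mem, hS.mem, hT.mem]
  have e1 : content (x.1 + 1, x.2) = content x - 1 := by unfold content; push_cast; ring
  have e2 : content (x.1, x.2 + 1) = content x + 1 := by unfold content; push_cast; ring
  rw [e1, e2]
  unfold rowF at *
  have s1 := rimB_step μ (content x)
  have s2 := rimB_step μ (content x + 1)
  have s3 : content x = a → rimB μ (content x - 1) = rimB μ (content x) := by
    intro e; rw [e]; exact rimB_white μ a ha
  have s4 : content x + 1 = b → rimB μ (content x + 1 - 1) = rimB μ (content x + 1) + 1 := by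
    intro e; rw [e]; exact rimB_black μ b hb
  rw [show content x + 1 - 1 = content x by ring] at s2 s4
  push_cast
  constructor
  · omega
  · omega

lemma disj_of_depth {μ : YoungDiagram} {S T : Finset (ℕ × ℕ)} {d d' a b a' b' : ℤ}
    (hS : Rib S (rowF μ d) a b) (hT : Rib T (rowF μ d') a' b') (h : d' + 2 ≤ d) :
    HooksDisjoint S T ∧ HooksDisjoint T S := by
  have key : ∀ x ∈ S, ∀ y ∈ T, x ≠ y ∧ ¬ BoxAdj x y ∧ ¬ BoxAdj y x := by
    intro x hx y hy
    rw [hS.mem] at hx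
    rw [hT.mem] at hy
    unfold rowF at *
    have s1 := rimB_step μ (content x)
    have s2 := rimB_step μ (content x + 1)
    rw [show content x + 1 - 1 = content x by ring] at s2
    have b5 : content x = x.2 - x.1 := rfl
    have b6 : content y = y.2 - y.1 := rfl
    have main : ¬ BoxAdj x y := by
      intro hadj
      have : content y = content x + 1 ∨ content y = content x - 1 := by
        unfold BoxAdj at hadj; omega
      unfold BoxAdj at hadj
      rcases this with e | e <;> rw [e] at hy <;> omega
    refine ⟨?_, main, ?_⟩
    · rintro rfl; omega
    · intro hadj; apply main; unfold BoxAdj at *; omega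
  exact ⟨fun x hx y hy => ⟨(key x hx y hy).1, (key x hx y hy).2.1⟩,
    fun y hy x hx => ⟨(key x hx y hy).1.symm, (key x hx y hy).2.2⟩⟩

lemma disj_of_content {S T : Finset (ℕ × ℕ)} {f g : ℤ → ℤ} {a b a' b' : ℤ}
    (hS : Rib S f a b) (hT : Rib T g a' b') (h : b < a' ∨ b' < a) : HooksDisjoint S T := by
  intro x hx y hy
  rw [hS.mem] at hx
  rw [hT.mem] at hy
  have b5 : content x = x.2 - x.1 := rfl
  have b6 : content y = y.2 - y.1 := rfl
  refine ⟨?_, ?_⟩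
  · rintro rfl; omega
  · unfold BoxAdj; omega

lemma forward (μ lam : YoungDiagram) (h : InPi μ lam) :
    lam ≤ μ ∧ InGamma (μ.cells \ lam.cells) := by
  classical
  obtain ⟨P, hA, hpw, hflip⟩ := h
  have hA' := fun p hp => (arrow_iff μ p.1 p.2).1 (hA p hp)
  have good : GoodP μ P := ⟨fun p hp => (hA' p hp).1, fun p hp => (hA' p hp).2.1,
    fun p hp => (hA' p hp).2.2.1, hpw⟩
  rw [good.flip_iff] at hflip
  have hle : lam ≤ μ := le_of_rimB (fun c => by have := hflip c; omega)
  let H : ℤ × ℤ → Finset (ℕ × ℕ) := fun p => ribSet (rowF μ (pdepth P p)) p.1 p.2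
  have hH : ∀ p ∈ P, Rib (H p) (rowF μ (pdepth P p)) p.1 p.2 := by
    intro p hp
    apply ribSet_rib (good.lt p hp)
    intro c h1 h2
    have a1 := pdepth_lt_pairN hp c ⟨h1, h2⟩
    have a2 := hflip c
    have a3 := rimB_nonneg lam c
    have a4 := rimB_ge lam c
    unfold rowF
    omega
  have hGZ : ∀ p ∈ P, InGammaZero (H p) := by
    intro p hp
    rw [(hH p hp).gammaZero_iff (rowF_step _ _), numArrow_rowF]
    exact (hA' p hp).2.2.2
  have nest : ∀ p ∈ P, ∀ q ∈ P, (q.1 < p.1 ∧ p.2 < q.2) →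
      (HooksDisjoint (H p) (H q) ∧ HooksDisjoint (H q) (H p)) ∨ NestedIn (H p) (H q) := by
    intro p hp q hq hpq
    have hd := pdepth_lt hq hpq
    by_cases e : pdepth P p = pdepth P q + 1
    · right
      have := hH p hp
      rw [e] at this
      push_cast at this
      exact nested_of_depth this (hH q hq) (good.w p hp) (good.b p hp) hpq.1 hpq.2
    · left
      exact disj_of_depth (hH p hp) (hH q hq) (by omega)
  refine ⟨hle, ⟨lam, μ, hle, rfl⟩, P.image H, ⟨?_, ?_, ?_, ?_⟩, ?_⟩
  · intro γ hγ
    obtain ⟨p, hp, rfl⟩ := Finset.mem_image.1 hγ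
    exact (hGZ p hp).1
  · intro γ hγ
    obtain ⟨p, hp, rfl⟩ := Finset.mem_image.1 hγ
    intro x hx
    rw [(hH p hp).mem] at hx
    rw [mem_skew, hflip]
    have a1 := pdepth_lt_pairN hp (content x) ⟨hx.1, hx.2.1⟩
    unfold rowF at hx
    omega
  · intro x hx
    rw [mem_skew, hflip] at hx
    obtain ⟨p, hp, hc, hd⟩ := pdepth_surj good (content x)
      (rimB μ (content x) - 1 - x.1).toNat (by omega)
    refine ⟨H p, ⟨Finset.mem_image_of_mem _ hp, ?_⟩, ?_⟩
    · rw [(hH p hp).mem]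
      unfold rowF
      omega
    · rintro γ ⟨hγ, hxγ⟩
      obtain ⟨q, hq, rfl⟩ := Finset.mem_image.1 hγ
      rw [(hH q hq).mem] at hxγ
      unfold rowF at hxγ
      by_contra hne
      have hne' : p ≠ q := by rintro rfl; exact hne rfl
      rcases good.pw p hp q hq hne' with h1 | h1 | h1 | h1
      · omega
      · omega
      · have := pdepth_lt hq h1
        omega
      · have := pdepth_lt hp h1
        omega
  · intro γ hγ δ hδ hne
    obtain ⟨p, hp, rfl⟩ := Finset.mem_image.1 hγ
    obtain ⟨q, hq, rfl⟩ := Finset.mem_image.1 hδ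
    have hne' : p ≠ q := by rintro rfl; exact hne rfl
    rcases good.pw p hp q hq hne' with h1 | h1 | h1 | h1
    · exact Or.inl (disj_of_content (hH p hp) (hH q hq) (Or.inl h1))
    · exact Or.inl (disj_of_content (hH p hp) (hH q hq) (Or.inr h1))
    · rcases nest p hp q hq h1 with h2 | h2
      · exact Or.inl h2.1
      · exact Or.inr (Or.inl h2)
    · rcases nest q hq p hp h1 with h2 | h2
      · exact Or.inl h2.2
      · exact Or.inr (Or.inr h2)
  · intro γ hγ
    obtain ⟨p, hp, rfl⟩ := Finset.mem_image.1 hγ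
    exact hGZ p hp

end Forward

section Backward

lemma hook_next {S : Finset (ℕ × ℕ)} (hS : IsHook S) {x y : ℕ × ℕ} (hx : x ∈ S) (hy : y ∈ S)
    (h : content x < content y) : ∃ z ∈ S, content z = content x + 1 ∧ BoxAdj x z := by
  have path := hS.2.2.1 x hx y hy
  clear hy
  induction path with
  | refl => omega
  | @tail u v _ huv ih =>
    by_cases hu : content x < content u
    · exact ih hu
    · obtain ⟨h1, h2, h3⟩ := huv
      have b5 : content u = u.2 - u.1 := rfl
      have b6 : content v = v.2 - v.1 := rfl
      have e : content u = content x := by unfold BoxAdj at h3; omega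
      have := hS.2.2.2 u h1 x hx e
      subst this
      exact ⟨v, h2, by unfold BoxAdj at h3; omega, h3⟩

/-- diagonal shift -/
def dsh (x : ℕ × ℕ) (k : ℕ) : ℕ × ℕ := (x.1 + k, x.2 + k)

lemma content_dsh (x : ℕ × ℕ) (k : ℕ) : content (dsh x k) = content x := by
  unfold content dsh; push_cast; ring

lemma content_down (x : ℕ × ℕ) : content (x.1 + 1, x.2) = content x - 1 := by
  unfold content; push_cast; ring

lemma content_right (x : ℕ × ℕ) : content (x.1, x.2 + 1) = content x + 1 := by
  unfold content; push_cast; ring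

lemma nested_shift {γ δ : Finset (ℕ × ℕ)} (hγ : IsHook γ) (hδ : IsHook δ)
    (hdis : ∀ x ∈ γ, x ∉ δ) (h : NestedIn γ δ) : ∀ x ∈ γ, dsh x 1 ∈ δ := by
  intro x hx
  obtain ⟨h1, h2⟩ := h x hx
  have ne : dsh x 1 ∉ γ := by
    intro h3
    have := hγ.2.2.2 _ h3 x hx (content_dsh x 1)
    have := congrArg Prod.fst this
    simp [dsh] at this
  rcases h1 with h1 | h1
  · rcases (h _ h1).2 with h3 | h3
    · exact absurd h3 ne
    · exact h3
  · rcases h2 with h2 | h2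
    · rcases (h _ h2).1 with h3 | h3
      · exact absurd h3 ne
      · exact h3
    · obtain ⟨z, hz, hzc, hadj⟩ := hook_next hδ h1 h2 (by rw [content_down, content_right]; omega)
      have hzx : z ≠ x := by rintro rfl; exact hdis _ hx hz
      have : z = dsh x 1 := by
        have e : z.1 ≠ x.1 ∨ z.2 ≠ x.2 := by
          by_contra hh
          push Not at hh
          exact hzx (Prod.ext hh.1 hh.2)
        unfold content at hzc
        unfold BoxAdj at hadj
        simp only at hadj hzc
        unfold dsh
        ext <;> simp only <;> omega
      rwa [← this]

/-- All facts about a covering we use. -/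
structure Cov (μ lam : YoungDiagram) (C : Finset (Finset (ℕ × ℕ))) : Prop where
  le : lam ≤ μ
  cov : IsCovering (μ.cells \ lam.cells) C

variable {μ lam : YoungDiagram} {C : Finset (Finset (ℕ × ℕ))}

lemma Cov.dis (h : Cov μ lam C) {γ δ} (hγ : γ ∈ C) (hδ : δ ∈ C) {x} (hx : x ∈ γ) (hx' : x ∈ δ) :
    γ = δ := by
  obtain ⟨ε, _, hu⟩ := h.cov.2.2.1 x (h.cov.2.1 γ hγ hx)
  rw [hu γ ⟨hγ, hx⟩, hu δ ⟨hδ, hx'⟩]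

lemma Cov.shift (h : Cov μ lam C) {γ δ} (hγ : γ ∈ C) (hδ : δ ∈ C) (hne : γ ≠ δ)
    (hn : NestedIn γ δ) : ∀ x ∈ γ, dsh x 1 ∈ δ :=
  nested_shift (h.cov.1 γ hγ) (h.cov.1 δ hδ) (fun _ hx hx' => hne (h.dis hγ hδ hx hx')) hn

lemma Cov.adj (h : Cov μ lam C) {γ δ} (hγ : γ ∈ C) (hδ : δ ∈ C) (hne : γ ≠ δ) {x y}
    (hx : x ∈ γ) (hy : y ∈ δ) (ha : BoxAdj x y) : NestedIn γ δ ∨ NestedIn δ γ := by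
  rcases h.cov.2.2.2 γ hγ δ hδ hne with h1 | h1
  · exact absurd ha (h1 x hx y hy).2
  · exact h1

lemma Cov.no_same (h : Cov μ lam C) {γ} (hγ : γ ∈ C) {x y} (hx : x ∈ γ) (hy : y ∈ γ)
    (hc : content x = content y) : x = y := (h.cov.1 γ hγ).2.2.2 x hx y hy hc

lemma dsh_ne (x : ℕ × ℕ) (k : ℕ) (hk : 0 < k) : dsh x k ≠ x := by
  intro h
  have := congrArg Prod.fst h
  simp [dsh] at this
  omega

lemma dsh_dsh (x : ℕ × ℕ) (k l : ℕ) : dsh (dsh x k) l = dsh x (k + l) := by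
  unfold dsh; simp [add_assoc]

lemma Cov.nest (h : Cov μ lam C) {γ δ} (hγ : γ ∈ C) (hδ : δ ∈ C) {x}
    (hx : x ∈ γ) (hy : dsh x 1 ∈ δ) : γ ≠ δ ∧ NestedIn γ δ := by
  have hne : γ ≠ δ := by
    rintro rfl
    exact dsh_ne x 1 one_pos (h.no_same hγ hy hx (content_dsh x 1))
  refine ⟨hne, ?_⟩
  have noδγ : ¬ NestedIn δ γ := by
    intro hn
    have := h.shift hδ hγ hne.symm hn _ hy
    rw [dsh_dsh] at this
    exact dsh_ne x 2 two_pos (h.no_same hγ this hx (content_dsh x 2))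
  have hxκ := (mem_skew μ lam x).1 (h.cov.2.1 γ hγ hx)
  have hyκ := (mem_skew μ lam _).1 (h.cov.2.1 δ hδ hy)
  rw [content_dsh] at hyκ
  have hdown : (x.1 + 1, x.2) ∈ μ.cells \ lam.cells := by
    rw [mem_skew, content_down]
    have s1 := rimB_step μ (content x)
    have s2 := rimB_step lam (content x)
    unfold dsh at hyκ
    push_cast at *
    omega
  obtain ⟨ε, ⟨hε, hdε⟩, _⟩ := h.cov.2.2.1 _ hdown
  have adj1 : BoxAdj x (x.1 + 1, x.2) := by unfold BoxAdj; simp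
  have adj2 : BoxAdj (x.1 + 1, x.2) (dsh x 1) := by unfold BoxAdj dsh; simp
  by_cases e1 : ε = γ
  · subst e1
    exact (h.adj hγ hδ hne hdε hy adj2).resolve_right noδγ
  by_cases e2 : ε = δ
  · subst e2
    exact (h.adj hγ hδ hne hx hdε adj1).resolve_right noδγ
  exfalso
  rcases h.adj hγ hε (Ne.symm e1) hx hdε adj1 with hn | hn
  · exact e2 (h.dis hε hδ (h.shift hγ hε (Ne.symm e1) hn x hx) hy)
  · rcases (hn _ hdε).2 with h3 | h3
    · exact e2 (h.dis hε hδ h3 hy)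
    · exact hne (h.dis hγ hδ h3 hy)

lemma mem_mu_dsh (μ : YoungDiagram) (x : ℕ × ℕ) (k : ℕ) :
    dsh x k ∈ μ.cells ↔ (x.1 : ℤ) + k < rimB μ (content x) := by
  rw [mem_iff_rimB, content_dsh]
  unfold dsh
  push_cast
  rfl

lemma Cov.depth_aux (h : Cov μ lam C) (k : ℕ) : ∀ γ ∈ C, ∀ x ∈ γ, ∀ y ∈ γ,
    dsh x k ∈ μ.cells → dsh y k ∈ μ.cells := by
  induction k with
  | zero =>
    intro γ hγ x hx y hy _
    exact (Finset.mem_sdiff.1 (h.cov.2.1 γ hγ hy)).1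
  | succ k ih =>
    intro γ hγ x hx y hy hm
    have hxκ := (mem_skew μ lam x).1 (h.cov.2.1 γ hγ hx)
    have : dsh x 1 ∈ μ.cells \ lam.cells := by
      rw [mem_skew, content_dsh]
      rw [mem_mu_dsh] at hm
      unfold dsh
      push_cast at *
      omega
    obtain ⟨δ, ⟨hδ, hxδ⟩, _⟩ := h.cov.2.2.1 _ this
    obtain ⟨hne, hn⟩ := h.nest hγ hδ hx hxδ
    have hyδ := h.shift hγ hδ hne hn y hy
    have := ih δ hδ _ hxδ _ hyδ
    rw [dsh_dsh, dsh_dsh, add_comm 1 k] at this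
    exact this hm

lemma Cov.depth (h : Cov μ lam C) {γ} (hγ : γ ∈ C) {x y} (hx : x ∈ γ) (hy : y ∈ γ) :
    rimB μ (content x) - x.1 = rimB μ (content y) - y.1 := by
  have key : ∀ x ∈ γ, ∀ y ∈ γ, rimB μ (content x) - x.1 ≤ rimB μ (content y) - y.1 := by
    intro x hx y hy
    have hxκ := (mem_skew μ lam x).1 (h.cov.2.1 γ hγ hx)
    have := h.depth_aux (rimB μ (content x) - x.1 - 1).toNat γ hγ x hx y hy
    rw [mem_mu_dsh, mem_mu_dsh] at this
    omega
  exact le_antisymm (key x hx y hy) (key y hy x hx)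

lemma Cov.exists_rib (h : Cov μ lam C) {γ} (hγ : γ ∈ C) :
    ∃ a b d : ℤ, Rib γ (rowF μ d) a b ∧ a ∉ Set.range (xseq μ) ∧ b ∈ Set.range (xseq μ) := by
  have hook := h.cov.1 γ hγ
  obtain ⟨m, hm, hmin⟩ := Finset.exists_min_image γ content hook.2.1
  obtain ⟨M, hM, hmax⟩ := Finset.exists_max_image γ content hook.2.1
  have hmM := hmin M hM
  have ex : ∀ c, content m ≤ c → c ≤ content M → ∃ x ∈ γ, content x = c := by
    intro c hc
    induction c, hc using Int.leInduction with
    | base => intro _; exact ⟨m, hm, rfl⟩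
    | succ n hn ih =>
      intro hle
      obtain ⟨x, hx, hxc⟩ := ih (by omega)
      obtain ⟨z, hz, hzc, _⟩ := hook_next hook hx hM (by omega)
      exact ⟨z, hz, by omega⟩
  have rib : Rib γ (rowF μ (rimB μ (content m) - m.1 - 1)) (content m) (content M + 1) := by
    refine ⟨by omega, fun x => ⟨fun hx => ?_, fun hx => ?_⟩, fun c h1 h2 => ex c h1 (by omega)⟩
    · have := h.depth hγ hx hm
      have := hmin x hx
      have := hmax x hx
      unfold rowF
      omega
    · obtain ⟨z, hz, hzc⟩ := ex (content x) hx.1 (by omega)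
      have e := h.depth hγ hz hm
      rw [hzc] at e
      unfold rowF at hx
      have : x = z := content_row_ext hzc.symm (by omega)
      rwa [this]
  refine ⟨_, _, _, rib, ?_, ?_⟩
  · rw [white_iff]
    have mκ := (mem_skew μ lam m).1 (h.cov.2.1 γ hγ hm)
    rcases rimB_step μ (content m) with s | s
    · exact s
    exfalso
    have hdown : (m.1 + 1, m.2) ∈ μ.cells \ lam.cells := by
      rw [mem_skew, content_down]
      have s2 := rimB_step lam (content m)
      push_cast
      omega
    obtain ⟨ε, ⟨hε, hdε⟩, _⟩ := h.cov.2.2.1 _ hdown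
    have hne : γ ≠ ε := by
      rintro rfl
      have := hmin _ hdε
      rw [content_down] at this
      omega
    have adj1 : BoxAdj m (m.1 + 1, m.2) := by unfold BoxAdj; simp
    rcases h.adj hγ hε hne hm hdε adj1 with hn | hn
    · have := h.shift hγ hε hne hn m hm
      have e := h.depth hε this hdε
      rw [content_dsh, content_down] at e
      unfold dsh at e
      push_cast at e
      omega
    · have := h.shift hε hγ hne.symm hn _ hdε
      have := hmin _ this
      rw [content_dsh, content_down] at this
      omega
  · rw [black_iff]
    have mκ := (mem_skew μ lam M).1 (h.cov.2.1 γ hγ hM)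
    rcases rimB_step μ (content M + 1) with s | s
    swap
    · exact s
    exfalso
    rw [show content M + 1 - 1 = content M by ring] at s
    have hdown : (M.1, M.2 + 1) ∈ μ.cells \ lam.cells := by
      rw [mem_skew, content_right]
      have s2 := rimB_step lam (content M + 1)
      rw [show content M + 1 - 1 = content M by ring] at s2
      simp only
      omega
    obtain ⟨ε, ⟨hε, hdε⟩, _⟩ := h.cov.2.2.1 _ hdown
    have hne : γ ≠ ε := by
      rintro rfl
      have := hmax _ hdε
      rw [content_right] at this
      omega
    have adj1 : BoxAdj M (M.1, M.2 + 1) := by unfold BoxAdj; simp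
    rcases h.adj hγ hε hne hM hdε adj1 with hn | hn
    · have := h.shift hγ hε hne hn M hM
      have e := h.depth hε this hdε
      rw [content_dsh, content_right] at e
      unfold dsh at e
      push_cast at e
      omega
    · have := h.shift hε hγ hne.symm hn _ hdε
      have := hmax _ this
      rw [content_dsh, content_right] at this
      omega

lemma nested_range {γ δ : Finset (ℕ × ℕ)} {f g : ℤ → ℤ} {a b a' b' : ℤ} (hγ : Rib γ f a b)
    (hδ : Rib δ g a' b') (h : NestedIn γ δ) : a' < a ∧ b < b' := by
  have hl := hγ.lt
  constructor
  · obtain ⟨x, hx, hc⟩ := hγ.ex a le_rfl hγ.lt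
    rcases (h x hx).1 with h1 | h1
    · rw [hγ.mem, content_down] at h1; omega
    · rw [hδ.mem, content_down] at h1; omega
  · obtain ⟨x, hx, hc⟩ := hγ.ex (b - 1) (by omega) (by omega)
    rcases (h x hx).2 with h1 | h1
    · rw [hγ.mem, content_right] at h1; omega
    · rw [hδ.mem, content_right] at h1; omega

lemma Cov.chain (h : Cov μ lam C) (k : ℕ) : ∀ γ ∈ C, ∀ δ ∈ C, ∀ x ∈ γ, dsh x (k + 1) ∈ δ →
    ∀ (f g : ℤ → ℤ) (a b a' b' : ℤ), Rib γ f a b → Rib δ g a' b' → a' < a ∧ b < b' := by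
  induction k with
  | zero =>
    intro γ hγ δ hδ x hx hxδ f g a b a' b' r1 r2
    exact nested_range r1 r2 (h.nest hγ hδ hx hxδ).2
  | succ k ih =>
    intro γ hγ δ hδ x hx hxδ f g a b a' b' r1 r2
    have hxκ := (mem_skew μ lam x).1 (h.cov.2.1 γ hγ hx)
    have hyκ := (mem_skew μ lam _).1 (h.cov.2.1 δ hδ hxδ)
    rw [content_dsh] at hyκ
    have : dsh x 1 ∈ μ.cells \ lam.cells := by
      rw [mem_skew, content_dsh]
      unfold dsh at *
      push_cast at *
      omega
    obtain ⟨ε, ⟨hε, hxε⟩, _⟩ := h.cov.2.2.1 _ this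
    obtain ⟨a2, b2, d2, r3, _⟩ := h.exists_rib hε
    have i1 := nested_range r1 r3 (h.nest hγ hε hx hxε).2
    have i2 := ih ε hε δ hδ _ hxε (by rw [dsh_dsh]; convert hxδ using 2; omega) _ _ _ _ _ _ r3 r2
    omega

lemma backward (μ lam : YoungDiagram) (hle : lam ≤ μ)
    (hG : InGamma (μ.cells \ lam.cells)) : InPi μ lam := by
  classical
  obtain ⟨_, C, hC, hGZ⟩ := hG
  have h : Cov μ lam C := ⟨hle, hC⟩
  have hex : ∀ γ : Finset (ℕ × ℕ), ∃ t : ℤ × ℤ × ℤ, γ ∈ C → Rib γ (rowF μ t.2.2) t.1 t.2.1 ∧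
      t.1 ∉ Set.range (xseq μ) ∧ t.2.1 ∈ Set.range (xseq μ) := by
    intro γ
    by_cases hγ : γ ∈ C
    · obtain ⟨a, b, d, hr⟩ := h.exists_rib hγ
      exact ⟨(a, b, d), fun _ => hr⟩
    · exact ⟨0, fun h' => absurd h' hγ⟩
  choose t ht using hex
  let pr : Finset (ℕ × ℕ) → ℤ × ℤ := fun γ => ((t γ).1, (t γ).2.1)
  have hrib : ∀ γ ∈ C, Rib γ (rowF μ (t γ).2.2) (pr γ).1 (pr γ).2 := fun γ hγ => (ht γ hγ).1
  have hw : ∀ γ ∈ C, (pr γ).1 ∉ Set.range (xseq μ) := fun γ hγ => (ht γ hγ).2.1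
  have hb : ∀ γ ∈ C, (pr γ).2 ∈ Set.range (xseq μ) := fun γ hγ => (ht γ hγ).2.2
  have pw : ∀ γ ∈ C, ∀ δ ∈ C, γ ≠ δ → ((pr γ).2 < (pr δ).1 ∨ (pr δ).2 < (pr γ).1 ∨
      ((pr δ).1 < (pr γ).1 ∧ (pr γ).2 < (pr δ).2) ∨
      ((pr γ).1 < (pr δ).1 ∧ (pr δ).2 < (pr γ).2)) := by
    intro γ hγ δ hδ hne
    have n1 : (pr γ).2 ≠ (pr δ).1 := fun e => hw δ hδ (e ▸ hb γ hγ)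
    have n2 : (pr δ).2 ≠ (pr γ).1 := fun e => hw γ hγ (e ▸ hb δ hδ)
    have l1 := (hrib γ hγ).lt
    have l2 := (hrib δ hδ).lt
    by_cases hint : (pr γ).2 < (pr δ).1 ∨ (pr δ).2 < (pr γ).1
    · rcases hint with h1 | h1
      · exact Or.inl h1
      · exact Or.inr (Or.inl h1)
    right; right
    obtain ⟨x, hx, hxc⟩ := (hrib γ hγ).ex (max (pr γ).1 (pr δ).1) (by omega) (by omega)
    obtain ⟨y, hy, hyc⟩ := (hrib δ hδ).ex (max (pr γ).1 (pr δ).1) (by omega) (by omega)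
    have hcc : content x = content y := by omega
    have hcc' := hcc
    unfold content at hcc'
    rcases lt_trichotomy x.1 y.1 with hlt | heq | hlt
    · left
      refine h.chain (y.1 - x.1 - 1) γ hγ δ hδ x hx ?_ _ _ _ _ _ _ (hrib γ hγ) (hrib δ hδ)
      convert hy using 1
      unfold dsh
      ext <;> simp only <;> omega
    · exact absurd (h.dis hγ hδ hx (content_row_ext hcc heq ▸ hy)) hne
    · right
      refine h.chain (x.1 - y.1 - 1) δ hδ γ hγ y hy ?_ _ _ _ _ _ _ (hrib δ hδ) (hrib γ hγ)
      convert hx using 1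
      unfold dsh
      ext <;> simp only <;> omega
  have inj : ∀ γ ∈ C, ∀ δ ∈ C, pr γ = pr δ → γ = δ := by
    intro γ hγ δ hδ e
    by_contra hne
    have := pw γ hγ δ hδ hne
    have l1 := (hrib γ hγ).lt
    rw [e] at this l1
    omega
  have good : GoodP μ (C.image pr) := by
    refine ⟨?_, ?_, ?_, ?_⟩
    · intro p hp
      obtain ⟨γ, hγ, rfl⟩ := Finset.mem_image.1 hp
      exact (hrib γ hγ).lt
    · intro p hp
      obtain ⟨γ, hγ, rfl⟩ := Finset.mem_image.1 hp
      exact hw γ hγ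
    · intro p hp
      obtain ⟨γ, hγ, rfl⟩ := Finset.mem_image.1 hp
      exact hb γ hγ
    · intro p hp q hq hne
      obtain ⟨γ, hγ, rfl⟩ := Finset.mem_image.1 hp
      obtain ⟨δ, hδ, rfl⟩ := Finset.mem_image.1 hq
      exact pw γ hγ δ hδ (by rintro rfl; exact hne rfl)
  refine ⟨C.image pr, ?_, good.pw, ?_⟩
  · intro p hp
    rw [arrow_iff]
    refine ⟨good.lt p hp, good.w p hp, good.b p hp, ?_⟩
    obtain ⟨γ, hγ, rfl⟩ := Finset.mem_image.1 hp
    rw [← numArrow_rowF μ (t γ).2.2, ← (hrib γ hγ).gammaZero_iff (rowF_step _ _)]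
    exact hGZ γ hγ
  · rw [good.flip_iff]
    intro c
    have e1 : pairN (C.image pr) c = (C.filter (fun γ => (pr γ).1 ≤ c ∧ c < (pr γ).2)).card := by
      unfold pairN
      rw [Finset.filter_image, Finset.card_image_of_injOn]
      intro γ hγ δ hδ e
      simp only [Finset.coe_filter, Set.mem_ofPred_eq] at hγ hδ
      exact inj γ hγ.1 δ hδ.1 e
    have e2 : (C.filter (fun γ => (pr γ).1 ≤ c ∧ c < (pr γ).2)).card =
        (Finset.Ico (rimB lam c) (rimB μ c)).card := by
      refine Finset.card_bij (fun γ _ => rowF μ (t γ).2.2 c) ?_ ?_ ?_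
      · intro γ hγ
        obtain ⟨hγ, h1, h2⟩ := Finset.mem_filter.1 hγ
        obtain ⟨x, hx, hxc⟩ := (hrib γ hγ).ex c h1 h2
        have m1 := ((hrib γ hγ).mem x).1 hx
        have m2 := (mem_skew μ lam x).1 (h.cov.2.1 γ hγ hx)
        rw [hxc] at m1 m2
        rw [Finset.mem_Ico]
        omega
      · intro γ hγ δ hδ e
        obtain ⟨hγ, h1, h2⟩ := Finset.mem_filter.1 hγ
        obtain ⟨hδ, h3, h4⟩ := Finset.mem_filter.1 hδ
        obtain ⟨x, hx, hxc⟩ := (hrib γ hγ).ex c h1 h2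
        have m1 := ((hrib γ hγ).mem x).1 hx
        refine h.dis hγ hδ hx ?_
        rw [(hrib δ hδ).mem, hxc]
        rw [hxc] at m1
        exact ⟨h3, h4, by omega⟩
      · intro v hv
        rw [Finset.mem_Ico] at hv
        have g1 := rimB_nonneg lam c
        have g2 := rimB_ge lam c
        have ec : content (v.toNat, (c + v).toNat) = c := by
          unfold content; simp only; omega
        have hm : (v.toNat, (c + v).toNat) ∈ μ.cells \ lam.cells := by
          rw [mem_skew, ec]
          simp only
          omega
        obtain ⟨γ, ⟨hγ, hxγ⟩, _⟩ := h.cov.2.2.1 _ hm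
        have m1 := ((hrib γ hγ).mem _).1 hxγ
        rw [ec] at m1
        simp only at m1
        exact ⟨γ, Finset.mem_filter.2 ⟨hγ, m1.1, m1.2.1⟩, by omega⟩
    have e3 := rimB_le hle c
    rw [e1, e2, Int.card_Ico]
    omega

end Backward

/-- `λ ∈ Π(μ)` if and only if `λ ⊆ μ` and the skew diagram `μ/λ` lies in `Γ`. -/
theorem inPi_iff_gamma (μ lam : YoungDiagram) :
    InPi μ lam ↔ lam ≤ μ ∧ InGamma (μ.cells \ lam.cells) := 
  ⟨forward μ lam, fun h => backward μ lam h.1 h.2⟩
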